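/- Let R be a supercommutative superalgebra over ℚ, let R((x))[φ] be the superalgebra of formal Laurent series in x (finitely many negative powers) together with the odd variable φ, and let T = −Σ_{j≥1}(A_j L_j(x,φ) + M_{j−1/2} G_{j−1/2}(x,φ)) with (A_j)_{j≥1} in R⁰ and (M_{j−1/2})_{j≥1} in R¹ (see context). Set (x̃, φ̃) = (exp(T)(x), exp(T)(φ)). Then x̃ is invertible in R((x))[φ], and for every H̄ ∈ R((x))[φ] the substitution H̄(x̃, φ̃) (defined in the context) is coefficientwise well defined and satisfies H̄(x̃, φ̃) = exp(T)(H̄). -/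

import Mathlib

/- A supercommutative superalgebra over `ℚ` is encoded as a `ℚ`-algebra `R` together with its
grading involution `σ : R →+* R` (`σ = id` on `R⁰`, `σ = −id` on `R¹`; over `ℚ` the data of
the direct sum decomposition `R = R⁰ ⊕ R¹` is equivalent to that of `σ`), with
supercommutativity expressed by: even elements are central, and odd elements anticommute.

An element `a + φb` of `R((x))[φ]` is encoded as the pair `(a, b)` of its coefficient
functions `ℤ → R`; membership in `R((x))` corresponds to the support being bounded below. -/

noncomputable section

/-- Elements `a + φ b` of `R((x))[φ]`, encoded as pairs of coefficient functions. -/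
abbrev SLS (R : Type*) := (ℤ → R) × (ℤ → R)

variable {R : Type*} [Ring R] [Algebra ℚ R]

/-- Support bounded below: finitely many negative powers of `x`. -/
def SuppBddBelow (a : ℤ → R) : Prop := ∃ N : ℤ, ∀ n : ℤ, n < N → a n = 0

/-- Convolution product of coefficient functions. -/
def conv (a b : ℤ → R) : ℤ → R := fun n => ∑ᶠ k : ℤ, a k * b (n - k)

/-- The product `(a + φb)(c + φd) = ac + φ(σ(a)d + bc)` of `R((x))[φ]`. -/
def slsMul (σ : R →+* R) (u v : SLS R) : SLS R :=
  (conv u.1 v.1, conv (fun k => σ (u.1 k)) v.2 + conv u.2 v.1)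

/-- The unit `1` of `R((x))[φ]`. -/
def slsOne : SLS R := (fun n => if n = 0 then 1 else 0, 0)

/-- The element `x` of `R((x))[φ]`. -/
def slsX : SLS R := (fun n => if n = 1 then 1 else 0, 0)

/-- The element `φ` of `R((x))[φ]`. -/
def slsPhi : SLS R := (0, fun n => if n = 0 then 1 else 0)

/-- Powers in `R((x))[φ]`. -/
def slsPow (σ : R →+* R) (u : SLS R) : ℕ → SLS R
  | 0 => slsOne
  | k + 1 => slsMul σ u (slsPow σ u k)

/-- Left multiplication by the scalar `r ∈ R`: `r(a + φb) = ra + φσ(r)b`. -/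
def slsSmulL (σ : R →+* R) (r : R) (u : SLS R) : SLS R :=
  (fun n => r * u.1 n, fun n => σ r * u.2 n)

/-- Coefficientwise sum of a `ℤ`-indexed family of elements of `R((x))[φ]`. -/
def slsSumZ (f : ℤ → SLS R) : SLS R :=
  (fun m => ∑ᶠ n : ℤ, (f n).1 m, fun m => ∑ᶠ n : ℤ, (f n).2 m)

/-- `Xⁿ` for `n ∈ ℤ`, where `Y` denotes the inverse of `X`. -/
def slsZPow (σ : R →+* R) (X Y : SLS R) (n : ℤ) : SLS R :=
  if 0 ≤ n then slsPow σ X n.toNat else slsPow σ Y (-n).toNat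

/-- Substitution of the pair `(X, Φ)` for `(x, φ)` in `u = Σ_{n∈ℤ} aₙxⁿ + φΣ_{n∈ℤ} bₙxⁿ`:
`u(X, Φ) = Σ_{n∈ℤ} aₙ Xⁿ + Φ·Σ_{n∈ℤ} bₙ Xⁿ`, coefficientwise, where `Y = X⁻¹` is used for
the negative powers of `X`. -/
def slsSubst (σ : R →+* R) (u X Y Φ : SLS R) : SLS R :=
  slsSumZ (fun n => slsSmulL σ (u.1 n) (slsZPow σ X Y n))
    + slsMul σ Φ (slsSumZ fun n => slsSmulL σ (u.2 n) (slsZPow σ X Y n))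

/-- The operator `T = −Σ_{j≥1}(A_j L_j(x,φ) + M_{j−1/2} G_{j−1/2}(x,φ))`, concretely
`T(a, b) = (Σ_{j≥1} A_j x^(j+1) a′ + Σ_{j≥1} M_{j−1/2} xʲ b,
Σ_{j≥1} A_j (x^(j+1) b′ + ((j+1)/2) xʲ b) + Σ_{j≥1} M_{j−1/2} xʲ a′)`, written
coefficientwise (the summation index is shifted so that `j + 1` ranges over `j ≥ 1`;
`M j` stands for `M_{j−1/2}`). -/
def slsT (A M : ℕ → R) (u : SLS R) : SLS R :=
  (fun n => ∑ᶠ j : ℕ,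
      (A (j + 1) * ((n - ((j : ℤ) + 1)) • u.1 (n - ((j : ℤ) + 1)))
        + M (j + 1) * u.2 (n - ((j : ℤ) + 1))),
   fun n => ∑ᶠ j : ℕ,
      (A (j + 1) * ((n - ((j : ℤ) + 1)) • u.2 (n - ((j : ℤ) + 1))
          + (((j : ℚ) + 2) / 2) • u.2 (n - ((j : ℤ) + 1)))
        + M (j + 1) * ((n - (j : ℤ)) • u.1 (n - (j : ℤ)))))

/-- `exp(T)(u) = Σ_{k≥0} Tᵏ(u)/k!`, coefficientwise. -/
def slsExp (A M : ℕ → R) (u : SLS R) : SLS R :=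
  (fun n => ∑ᶠ k : ℕ, (k.factorial : ℚ)⁻¹ • (((slsT A M)^[k]) u).1 n,
   fun n => ∑ᶠ k : ℕ, (k.factorial : ℚ)⁻¹ • (((slsT A M)^[k]) u).2 n)

/-! `T` is an even derivation raising the weight by one, where `xⁿ` has weight `2n` and `φxⁿ` has
weight `2n + 1`. Hence `∑ₖ Tᵏ(u) / k!` converges in the weight topology, and by the Leibniz rule
`exp T` is a continuous ring endomorphism of `R((x))[φ]`. It fixes the constants because `T` kills
them, so it maps the convergent expansion `∑ₙ aₙxⁿ + φ∑ₙ bₙxⁿ` to its value at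
`(exp T x, exp T φ)`; and it maps the unit `x` to a unit. -/

section DerivationExp

open Finset.HasAntidiagonal (antidiagonal)

theorem tsum_mul_tsum_antidiagonal_of_nonarchimedean {V : Type*} [Ring V] [TopologicalSpace V]
    [NonarchimedeanRing V] [T2Space V] {f g : ℕ → V} (hf : Summable f) (hg : Summable g) :
    (∑' n, f n) * ∑' n, g n = ∑' n, ∑ ij ∈ antidiagonal n, f ij.1 * g ij.2 := by
  let := IsTopologicalAddGroup.rightUniformSpace V
  have := isUniformAddGroup_of_addCommGroup (G := V)
  exact hf.tsum_mul_tsum_eq_tsum_sum_antidiagonal hg (hf.mul_of_nonarchimedean hg)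

variable {V : Type*} [Ring V]

/-- The Leibniz rule for an additive endomorphism of a noncommutative ring; Mathlib's `Derivation`
requires a commutative one. -/
def IsDerivation (D : V →+ V) : Prop :=
  ∀ u v, D (u * v) = D u * v + u * D v

variable {D : V →+ V}

theorem IsDerivation.iterate_mul (hD : IsDerivation D) (k : ℕ) (u v : V) :
    D^[k] (u * v) = ∑ ij ∈ antidiagonal k, k.choose ij.1 • (D^[ij.1] u * D^[ij.2] v) := by
  induction k with
  | zero => simp
  | succ k ih =>
    rw [Function.iterate_succ_apply', ih, map_sum, Finset.sum_antidiagonal_choose_succ_nsmul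
      (fun i j => D^[i] u * D^[j] v) k, add_comm, ← Finset.sum_add_distrib]
    refine Finset.sum_congr rfl fun ij hij => ?_
    have hchoose : k.choose ij.2 = k.choose ij.1 :=
      Nat.choose_symm_of_eq_add (by rw [add_comm, Finset.HasAntidiagonal.mem_antidiagonal.mp hij])
    simp only [map_nsmul, hD _ _, smul_add, ← Function.iterate_succ_apply' D, hchoose]

theorem IsDerivation.map_one (hD : IsDerivation D) : D 1 = 0 := by
  simpa using hD 1 1

variable [Module ℚ V]

/-- The `k`-th term `Dᵏ(u) / k!` of the exponential series of `D` at `u`. -/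
def expTerm (D : V →+ V) (k : ℕ) (u : V) : V :=
  (k.factorial : ℚ)⁻¹ • D^[k] u

theorem expTerm_add (k : ℕ) (u v : V) : expTerm D k (u + v) = expTerm D k u + expTerm D k v := by
  simp only [expTerm, iterate_map_add, smul_add]

theorem IsDerivation.expTerm_mul (hD : IsDerivation D) (k : ℕ) (u v : V) :
    expTerm D k (u * v) =
      ∑ ij ∈ antidiagonal k, expTerm D ij.1 u * expTerm D ij.2 v := by
  rw [expTerm, hD.iterate_mul, Finset.smul_sum]
  refine Finset.sum_congr rfl fun ij hij => ?_
  rw [← Finset.HasAntidiagonal.mem_antidiagonal.mp hij]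
  simp only [expTerm, smul_mul_smul_comm, ← Nat.cast_smul_eq_nsmul ℚ, smul_smul]
  congr 1
  rw [Nat.cast_add_choose]
  field_simp

variable [TopologicalSpace V]

theorem hasSum_expTerm_of_map_eq_zero {u : V} (hu : D u = 0) :
    HasSum (fun k => expTerm D k u) u := by
  have hterm : ∀ k, k ≠ 0 → expTerm D k u = 0 := fun k hk => by
    obtain ⟨k, rfl⟩ := Nat.exists_eq_succ_of_ne_zero hk
    rw [expTerm, Function.iterate_succ_apply, hu, iterate_map_zero, smul_zero]
  simpa [expTerm] using hasSum_single 0 hterm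

variable [NonarchimedeanRing V] [T2Space V]

theorem IsDerivation.tsum_expTerm_mul (hD : IsDerivation D)
    (hs : ∀ u, Summable fun k => expTerm D k u) (u v : V) :
    ∑' k, expTerm D k (u * v) = (∑' k, expTerm D k u) * ∑' k, expTerm D k v := by
  simp only [hD.expTerm_mul]
  exact (tsum_mul_tsum_antidiagonal_of_nonarchimedean (hs u) (hs v)).symm

/-- The exponential `u ↦ ∑ₖ Dᵏ(u) / k!` of a pointwise exponentiable derivation `D`, as a ring
endomorphism. -/
def IsDerivation.exp (hD : IsDerivation D) (hs : ∀ u, Summable fun k => expTerm D k u) :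
    V →+* V where
  toFun u := ∑' k, expTerm D k u
  map_one' := (hasSum_expTerm_of_map_eq_zero hD.map_one).tsum_eq
  map_mul' := hD.tsum_expTerm_mul hs
  map_zero' := (hasSum_expTerm_of_map_eq_zero (map_zero D)).tsum_eq
  map_add' u v := by simp only [expTerm_add, (hs u).tsum_add (hs v)]

theorem IsDerivation.hasSum_exp (hD : IsDerivation D)
    (hs : ∀ u, Summable fun k => expTerm D k u) (u : V) :
    HasSum (fun k => expTerm D k u) (hD.exp hs u) :=
  (hs u).hasSum

theorem IsDerivation.exp_of_map_eq_zero (hD : IsDerivation D)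
    (hs : ∀ u, Summable fun k => expTerm D k u) {u : V} (hu : D u = 0) : hD.exp hs u = u :=
  (hasSum_expTerm_of_map_eq_zero hu).tsum_eq

end DerivationExp

theorem map_eq_finsum_of_hasSum {ι G A : Type*} [AddCommGroup G] [TopologicalSpace G]
    [AddCommGroup A] {φ : G →+ A} (hφ : ∀ᶠ g in nhds 0, φ g = 0) [IsTopologicalAddGroup G]
    {f : ι → G} {e : G} (hf : HasSum f e) : φ e = ∑ᶠ i, φ (f i) := by
  let : TopologicalSpace A := ⊥
  have : DiscreteTopology A := ⟨rfl⟩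
  have hcont : Continuous φ := continuous_of_continuousAt_zero φ <| by
    rw [ContinuousAt, map_zero, nhds_discrete A, Filter.tendsto_pure]
    exact hφ
  have hsum : HasSum (fun i => φ (f i)) (φ e) := hf.map φ hcont
  rw [← hsum.tsum_eq, tsum_eq_finsum hsum.summable.hasFiniteSupport_of_discreteTopology]

theorem ringSubgroupsBasis_of_filtration {ι V : Type*} [AddCommGroup ι] [LinearOrder ι]
    [IsOrderedAddMonoid ι] [Ring V] {F : ι → AddSubgroup V} (hF : Antitone F)
    (hmul : ∀ i j, ∀ u ∈ F i, ∀ v ∈ F j, u * v ∈ F (i + j)) (hexists : ∀ u, ∃ i, u ∈ F i) :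
    RingSubgroupsBasis F where
  inter i j := ⟨max i j, le_inf (hF (le_max_left i j)) (hF (le_max_right i j))⟩
  mul i := by
    refine ⟨max i 0, Set.mul_subset_iff.mpr fun u hu v hv => ?_⟩
    exact hF (le_add_of_le_of_nonneg (le_max_left i 0) (le_max_right i 0)) (hmul _ _ u hu v hv)
  leftMul u i := by
    obtain ⟨j, hj⟩ := hexists u
    exact ⟨i - j, fun v hv => by simpa using hmul j (i - j) u hj v hv⟩
  rightMul u i := by
    obtain ⟨j, hj⟩ := hexists u
    exact ⟨i - j, fun v hv => by simpa using hmul (i - j) j v hv u hj⟩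

/-- The additive group of a ring `K` with the `K`-bimodule structure `r • m = τ r * m` and
`m <• r = m * r`, modelling the span `φK` of an odd variable `φ` with `rφ = φτ(r)`. -/
def TwistedBimodule {K : Type*} [Ring K] (_τ : K →+* K) : Type _ := K

namespace TwistedBimodule

variable {K : Type*} [Ring K] {τ : K →+* K}

instance : AddCommGroup (TwistedBimodule τ) := inferInstanceAs (AddCommGroup K)

instance : Module K (TwistedBimodule τ) := Module.compHom K τ

instance : Module Kᵐᵒᵖ (TwistedBimodule τ) := inferInstanceAs (Module Kᵐᵒᵖ K)

instance : SMulCommClass K Kᵐᵒᵖ (TwistedBimodule τ) where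
  smul_comm r s m := (mul_assoc (τ r) m s.unop).symm

instance [Module ℚ K] : Module ℚ (TwistedBimodule τ) := inferInstanceAs (Module ℚ K)

end TwistedBimodule

/-- The ring `K[φ]` of elements `a + φb`, where `φ² = 0` and `cφ = φτ(c)` for `c` in `K`. -/
abbrev TwistedDualNumber {K : Type*} [Ring K] (τ : K →+* K) : Type _ :=
  TrivSqZeroExt K (TwistedBimodule τ)

namespace TwistedDualNumber

variable {K : Type*} [Ring K] {τ : K →+* K}

/-- The component `a` of `a + φb`. -/
def even : TwistedDualNumber τ →+ K where
  toFun := TrivSqZeroExt.fst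
  map_zero' := rfl
  map_add' _ _ := rfl

/-- The component `b` of `a + φb`. -/
def odd : TwistedDualNumber τ →+ K where
  toFun := TrivSqZeroExt.snd
  map_zero' := rfl
  map_add' _ _ := rfl

/-- The element `a + φb`. -/
def mk (a b : K) : TwistedDualNumber τ :=
  TrivSqZeroExt.inl a + TrivSqZeroExt.inr b

/-- The odd variable `φ`. -/
def phi : TwistedDualNumber τ := mk 0 1

/-- The inclusion of `K` into `K[φ]`. -/
def coeHom : K →+* TwistedDualNumber τ := TrivSqZeroExt.inlHom K (TwistedBimodule τ)

@[ext]
theorem ext {u v : TwistedDualNumber τ} (heven : even u = even v) (hodd : odd u = odd v) : u = v :=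
  TrivSqZeroExt.ext heven hodd

@[simp]
theorem even_mk (a b : K) : even (mk a b : TwistedDualNumber τ) = a :=
  add_zero a

@[simp]
theorem odd_mk (a b : K) : odd (mk a b : TwistedDualNumber τ) = b :=
  zero_add b

@[simp]
theorem even_coeHom (a : K) : even (coeHom a : TwistedDualNumber τ) = a := rfl

@[simp]
theorem odd_coeHom (a : K) : odd (coeHom a : TwistedDualNumber τ) = 0 := rfl

@[simp]
theorem even_one : even (1 : TwistedDualNumber τ) = 1 := rfl

@[simp]
theorem odd_one : odd (1 : TwistedDualNumber τ) = 0 := rfl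

@[simp]
theorem even_mul (u v : TwistedDualNumber τ) : even (u * v) = even u * even v := rfl

@[simp]
theorem odd_mul (u v : TwistedDualNumber τ) :
    odd (u * v) = τ (even u) * odd v + odd u * even v := rfl

theorem mk_eq_add (a b : K) : (mk a b : TwistedDualNumber τ) = coeHom a + phi * coeHom b := by
  ext <;> simp [phi]

/-- The operator `a + φb ↦ (Pδ(a) + Qb) + φ(Pδ(b) + Bb + Qδ(a))` on `K[φ]`: a derivation of `K[φ]`
extending `Pδ` when `P` and `B` are central, `P` is even, and `Q` is odd and supercentral. -/
def vectorField (δ : K →+ K) (P B Q : K) : TwistedDualNumber τ →+ TwistedDualNumber τ where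
  toFun u := mk (P * δ (even u) + Q * odd u) (P * δ (odd u) + B * odd u + Q * δ (even u))
  map_zero' := by ext <;> simp
  map_add' u v := by ext <;> simp [mul_add] <;> abel

variable {δ : K →+ K} {P B Q : K}

@[simp]
theorem even_vectorField (u : TwistedDualNumber τ) :
    even (vectorField δ P B Q u) = P * δ (even u) + Q * odd u :=
  even_mk _ _

@[simp]
theorem odd_vectorField (u : TwistedDualNumber τ) :
    odd (vectorField δ P B Q u) = P * δ (odd u) + B * odd u + Q * δ (even u) :=
  odd_mk _ _

theorem isDerivation_vectorField (hτ : ∀ a, τ (τ a) = a) (hδ : IsDerivation δ)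
    (hδτ : ∀ a, τ (δ a) = δ (τ a)) (hP : ∀ a, a * P = P * a) (hτP : τ P = P)
    (hB : ∀ a, a * B = B * a) (hQ : ∀ a, a * Q = Q * τ a) (hτQ : τ Q = -Q) :
    IsDerivation (vectorField δ P B Q : TwistedDualNumber τ →+ TwistedDualNumber τ) := by
  have moveP (a b : K) : a * (P * b) = P * (a * b) := by rw [← mul_assoc, hP, mul_assoc]
  have moveB (a b : K) : a * (B * b) = B * (a * b) := by rw [← mul_assoc, hB, mul_assoc]
  have moveQ (a b : K) : a * (Q * b) = Q * (τ a * b) := by rw [← mul_assoc, hQ, mul_assoc]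
  intro u v
  ext
  · simp only [even_vectorField, even_mul, odd_mul, map_add, hδ _ _, mul_add, add_mul, mul_assoc,
      moveP, moveQ]
    abel
  · simp only [odd_vectorField, even_vectorField, even_mul, odd_mul, map_add, map_mul, hδ _ _, hδτ,
      hτP, hτQ, hτ, mul_add, add_mul, mul_assoc, neg_mul, moveP, moveB, moveQ]
    abel

end TwistedDualNumber

theorem finsum_eq_finsum_comp_of_injective {ι κ A : Type*} [AddCommMonoid A] {e : ι → κ}
    (he : Function.Injective e) {f : κ → A} (hf : f.support ⊆ Set.range e) :
    ∑ᶠ k, f k = ∑ᶠ i, f (e i) := by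
  rw [← finsum_mem_range he, finsum_mem_def, Set.indicator_eq_self.mpr hf]

section Laurent

open scoped LaurentSeries

variable {S : Type*} [Ring S]

theorem exists_forall_lt_coeff_eq_zero (f : S⸨X⸩) : ∃ N : ℤ, ∀ n < N, f.coeff n = 0 :=
  ⟨f.order, fun _ => HahnSeries.coeff_eq_zero_of_lt_order⟩

theorem finite_support_coeff_sub (f : S⸨X⸩) (n s : ℤ) :
    {j : ℕ | f.coeff (n - (j + s)) ≠ 0}.Finite := by
  obtain ⟨N, hN⟩ := exists_forall_lt_coeff_eq_zero f
  refine (Set.finite_Iic (n - s - N).toNat).subset fun j hj => ?_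
  by_contra hlt
  exact hj (hN _ (by rw [Set.mem_Iic] at hlt; omega))

theorem finite_support_coeff_mul_coeff_sub (f g : S⸨X⸩) (n : ℤ) :
    (Function.support fun k => f.coeff k * g.coeff (n - k)).Finite := by
  obtain ⟨N, hN⟩ := exists_forall_lt_coeff_eq_zero f
  obtain ⟨N', hN'⟩ := exists_forall_lt_coeff_eq_zero g
  refine (Set.finite_Icc N (n - N')).subset fun k hk => ⟨?_, ?_⟩ <;> by_contra hlt
  · exact left_ne_zero_of_mul hk (hN k (by omega))
  · exact right_ne_zero_of_mul hk (hN' (n - k) (by omega))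

theorem laurent_coeff_mul (f g : S⸨X⸩) (n : ℤ) :
    (f * g).coeff n = ∑ᶠ k : ℤ, f.coeff k * g.coeff (n - k) := by
  rw [HahnSeries.coeff_mul, finsum_eq_sum _ (finite_support_coeff_mul_coeff_sub f g n)]
  symm
  refine Finset.sum_of_injOn (fun k => (k, n - k)) (fun _ _ _ _ h => congrArg Prod.fst h)
    (fun k hk => ?_) (fun ij hij hnot => ?_) (fun _ _ => rfl)
  · have hk' : f.coeff k * g.coeff (n - k) ≠ 0 := by simpa using hk
    simpa using ⟨left_ne_zero_of_mul hk', right_ne_zero_of_mul hk'⟩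
  · obtain ⟨i, j⟩ := ij
    obtain rfl : j = n - i := by have := (Finset.mem_antidiagonal.mp hij).2.2; grind
    by_contra hne
    exact hnot ⟨i, by simpa using hne, rfl⟩

theorem laurent_coeff_mul_eq_zero {f g : S⸨X⸩} {n : ℤ}
    (h : ∀ i j, i + j = n → f.coeff i = 0 ∨ g.coeff j = 0) : (f * g).coeff n = 0 := by
  rw [laurent_coeff_mul]
  refine finsum_eq_zero_of_forall_eq_zero fun k => ?_
  rcases h k (n - k) (by ring) with hf | hg
  · rw [hf, zero_mul]
  · rw [hg, mul_zero]

/-- Coefficientwise application of a ring homomorphism to Laurent series. -/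
def mapCoeff (ψ : S →+* S) : S⸨X⸩ →+* S⸨X⸩ where
  toFun f := f.map ψ
  map_one' := HahnSeries.map_one ψ.toMonoidWithZeroHom
  map_mul' _ _ := HahnSeries.map_mul (ψ : S →ₙ+* S)
  map_zero' := by ext; simp
  map_add' _ _ := by ext; simp

@[simp]
theorem coeff_mapCoeff (ψ : S →+* S) (f : S⸨X⸩) (n : ℤ) :
    (mapCoeff ψ f).coeff n = ψ (f.coeff n) := rfl

theorem mapCoeff_single (ψ : S →+* S) (n : ℤ) (r : S) :
    mapCoeff ψ (HahnSeries.single n r) = HahnSeries.single n (ψ r) :=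
  HahnSeries.map_single (ψ : ZeroHom S S)

theorem mul_eq_mul_mapCoeff {ψ : S →+* S} {f : S⸨X⸩}
    (h : ∀ r i, r * f.coeff i = f.coeff i * ψ r) (g : S⸨X⸩) : g * f = f * mapCoeff ψ g := by
  ext n
  rw [laurent_coeff_mul, laurent_coeff_mul, ← finsum_comp_equiv (Equiv.subLeft n)]
  exact finsum_congr fun k => by simp [h]

/-- The formal derivative `d/dx` as an additive map. -/
def laurentDeriv (S : Type*) [Ring S] : S⸨X⸩ →+ S⸨X⸩ :=
  (LaurentSeries.derivative ℤ).toAddMonoidHom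

@[simp]
theorem coeff_laurentDeriv (f : S⸨X⸩) (n : ℤ) :
    (laurentDeriv S f).coeff n = (n + 1) • f.coeff (n + 1) := by
  simp [laurentDeriv]

theorem laurentDeriv_single_zero (r : S) : laurentDeriv S (HahnSeries.single 0 r) = 0 := by
  ext n
  rw [coeff_laurentDeriv, HahnSeries.coeff_single]
  split_ifs with hn
  · rw [hn, zero_smul]; rfl
  · rw [smul_zero]; rfl

theorem laurentDeriv_mapCoeff (ψ : S →+* S) (f : S⸨X⸩) :
    laurentDeriv S (mapCoeff ψ f) = mapCoeff ψ (laurentDeriv S f) := by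
  ext n
  simp only [coeff_laurentDeriv, coeff_mapCoeff, map_zsmul]

theorem isDerivation_laurentDeriv : IsDerivation (laurentDeriv S) := by
  intro f g
  ext n
  let c (k : ℤ) : S := f.coeff k * g.coeff (n + 1 - k)
  have hleft : (laurentDeriv S f * g).coeff n = ∑ᶠ k : ℤ, k • c k := by
    rw [laurent_coeff_mul, ← finsum_comp_equiv (Equiv.addRight (1 : ℤ)) (f := fun k => k • c k)]
    refine finsum_congr fun k => ?_
    simp only [c, coeff_laurentDeriv, smul_mul_assoc, Equiv.coe_addRight, add_sub_add_right_eq_sub]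
  have hright : (f * laurentDeriv S g).coeff n = ∑ᶠ k : ℤ, (n + 1 - k) • c k := by
    rw [laurent_coeff_mul]
    refine finsum_congr fun k => ?_
    rw [coeff_laurentDeriv, mul_smul_comm, sub_add_eq_add_sub]
  have hfin : c.support.Finite := finite_support_coeff_mul_coeff_sub f g (n + 1)
  have hfin_smul (w : ℤ → ℤ) : (Function.support fun k => w k • c k).Finite :=
    hfin.subset (Function.support_smul_subset_right w c)
  rw [HahnSeries.coeff_add, hleft, hright, ← finsum_add_distrib (hfin_smul _) (hfin_smul _),
    coeff_laurentDeriv, laurent_coeff_mul, smul_finsum' _ hfin]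
  exact finsum_congr fun k => by rw [← add_smul, add_sub_cancel]

/-- The variable `x` as a unit of the ring of Laurent series. -/
def laurentX (S : Type*) [Ring S] : S⸨X⸩ˣ where
  val := HahnSeries.single 1 1
  inv := HahnSeries.single (-1) 1
  val_inv := by simp
  inv_val := by simp

theorem laurentX_zpow_val (n : ℤ) : (laurentX S ^ n).val = HahnSeries.single n 1 := by
  induction n using Int.induction_on with
  | zero => simp
  | succ n ih => rw [zpow_add_one, Units.val_mul, ih]; simp [laurentX]
  | pred n ih => rw [zpow_sub_one, Units.val_mul, ih]; simp [laurentX, sub_eq_add_neg]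

/-- The Laurent series `∑ⱼ gⱼ x^(s+j)`. -/
def seriesFrom (s : ℤ) (g : ℕ → S) : S⸨X⸩ :=
  HahnSeries.ofSuppBddBelow (fun n => if s ≤ n then g (n - s).toNat else 0)
    ⟨s, fun _ hn => of_not_not fun h => hn (if_neg h)⟩

theorem coeff_seriesFrom (s : ℤ) (g : ℕ → S) (n : ℤ) :
    (seriesFrom s g).coeff n = if s ≤ n then g (n - s).toNat else 0 := rfl

theorem coeff_seriesFrom_add (s : ℤ) (g : ℕ → S) (j : ℕ) :
    (seriesFrom s g).coeff (j + s) = g j := by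
  simp [coeff_seriesFrom]

theorem coeff_seriesFrom_of_lt {s n : ℤ} (hn : n < s) (g : ℕ → S) :
    (seriesFrom s g).coeff n = 0 :=
  if_neg hn.not_ge

theorem coeff_seriesFrom_mul (s : ℤ) (g : ℕ → S) (f : S⸨X⸩) (n : ℤ) :
    (seriesFrom s g * f).coeff n = ∑ᶠ j : ℕ, g j * f.coeff (n - (j + s)) := by
  have hinj : Function.Injective fun j : ℕ => (j : ℤ) + s := fun i j h => by simpa using h
  rw [laurent_coeff_mul, finsum_eq_finsum_comp_of_injective hinj]
  · simp only [coeff_seriesFrom_add]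
  · intro k hk
    have hsk : s ≤ k := not_lt.mp fun hlt =>
      left_ne_zero_of_mul hk (coeff_seriesFrom_of_lt hlt g)
    exact ⟨(k - s).toNat, by grind⟩

theorem mapCoeff_seriesFrom (ψ : S →+* S) (s : ℤ) (g : ℕ → S) :
    mapCoeff ψ (seriesFrom s g) = seriesFrom s (ψ ∘ g) := by
  ext n
  simp only [coeff_mapCoeff, coeff_seriesFrom, Function.comp_apply, apply_ite ψ, map_zero]

theorem mul_seriesFrom {ψ : S →+* S} {g : ℕ → S} (h : ∀ r j, r * g j = g j * ψ r) (s : ℤ)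
    (f : S⸨X⸩) : f * seriesFrom s g = seriesFrom s g * mapCoeff ψ f := by
  refine mul_eq_mul_mapCoeff (fun r i => ?_) f
  rw [coeff_seriesFrom]
  split_ifs
  · exact h r _
  · rw [mul_zero, zero_mul]

theorem coeff_seriesFrom_mul_eq_zero (s : ℤ) (g : ℕ → S) {f : S⸨X⸩} {n : ℤ}
    (hf : ∀ i, i + s ≤ n → f.coeff i = 0) : (seriesFrom s g * f).coeff n = 0 := by
  rw [coeff_seriesFrom_mul]
  exact finsum_eq_zero_of_forall_eq_zero fun j => by rw [hf _ (by omega), mul_zero]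

end Laurent

/-- Supercommutativity of a ring `S` graded by the involution `σ`: even elements (`σ u = u`) are
central and odd elements (`σ u = -u`) anticommute. -/
structure IsSupercommutative {S : Type*} [Ring S] (σ : S →+* S) : Prop where
  involutive : ∀ r, σ (σ r) = r
  mul_comm_of_even : ∀ u v, σ u = u → u * v = v * u
  mul_anticomm_of_odd : ∀ u v, σ u = -u → σ v = -v → u * v = -(v * u)

theorem IsSupercommutative.mul_eq_mul_map_of_odd {S : Type*} [Ring S] [Module ℚ S] {σ : S →+* S}
    (hσ : IsSupercommutative σ) {m : S} (hm : σ m = -m) (r : S) : r * m = m * σ r := by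
  have heven : (r + σ r) * m = m * (r + σ r) :=
    hσ.mul_comm_of_even _ _ (by rw [map_add, hσ.involutive, add_comm])
  have hodd : (r - σ r) * m = -(m * (r - σ r)) :=
    hσ.mul_anticomm_of_odd _ _ (by rw [map_sub, hσ.involutive, neg_sub]) hm
  refine smul_right_injective S (two_ne_zero (α := ℚ)) ?_
  calc (2 : ℚ) • (r * m) = (r + σ r) * m + (r - σ r) * m := by rw [two_smul]; noncomm_ring
    _ = m * (r + σ r) + -(m * (r - σ r)) := by rw [heven, hodd]
    _ = (2 : ℚ) • (m * σ r) := by rw [two_smul]; noncomm_ring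

/-- The superalgebra `S((x))[φ]` over a ring `S` with grading involution `σ`. -/
abbrev SuperLaurent {S : Type*} [Ring S] (σ : S →+* S) : Type _ :=
  TwistedDualNumber (mapCoeff σ)

namespace SuperLaurent

open scoped LaurentSeries
open TwistedDualNumber

section Topology

variable {S : Type*} [Ring S] {σ : S →+* S}

/-- The elements of `S((x))[φ]` all of whose terms have weight at least `w`, where `xⁿ` has weight
`2n` and `φxⁿ` has weight `2n + 1`. -/
def weightSubgroup (σ : S →+* S) (w : ℤ) : AddSubgroup (SuperLaurent σ) where
  carrier := {u | (∀ n, 2 * n < w → (even u).coeff n = 0) ∧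
    ∀ n, 2 * n + 1 < w → (odd u).coeff n = 0}
  zero_mem' := ⟨fun _ _ => rfl, fun _ _ => rfl⟩
  add_mem' := fun hu hv => ⟨fun n hn => by simp [hu.1 n hn, hv.1 n hn],
    fun n hn => by simp [hu.2 n hn, hv.2 n hn]⟩
  neg_mem' := fun hu => ⟨fun n hn => by simp [hu.1 n hn], fun n hn => by simp [hu.2 n hn]⟩

theorem weightSubgroup_antitone : Antitone (weightSubgroup σ) := fun _ _ hw _ hu =>
  ⟨fun n hn => hu.1 n (hn.trans_le hw), fun n hn => hu.2 n (hn.trans_le hw)⟩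

theorem mul_mem_weightSubgroup {w w' : ℤ} {u v : SuperLaurent σ} (hu : u ∈ weightSubgroup σ w)
    (hv : v ∈ weightSubgroup σ w') : u * v ∈ weightSubgroup σ (w + w') := by
  refine ⟨fun n hn => ?_, fun n hn => ?_⟩
  · refine laurent_coeff_mul_eq_zero fun i j hij => ?_
    rcases lt_or_ge (2 * i) w with hi | hi
    · exact Or.inl (hu.1 i hi)
    · exact Or.inr (hv.1 j (by omega))
  · rw [odd_mul, HahnSeries.coeff_add, laurent_coeff_mul_eq_zero fun i j hij => ?_,
      laurent_coeff_mul_eq_zero fun i j hij => ?_, add_zero]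
    · rcases lt_or_ge (2 * i + 1) w with hi | hi
      · exact Or.inl (hu.2 i hi)
      · exact Or.inr (hv.1 j (by omega))
    · rcases lt_or_ge (2 * i) w with hi | hi
      · exact Or.inl (by rw [coeff_mapCoeff, hu.1 i hi, map_zero])
      · exact Or.inr (hv.2 j (by omega))

theorem exists_mem_weightSubgroup (u : SuperLaurent σ) : ∃ w, u ∈ weightSubgroup σ w := by
  obtain ⟨N, hN⟩ := exists_forall_lt_coeff_eq_zero (even u)
  obtain ⟨N', hN'⟩ := exists_forall_lt_coeff_eq_zero (odd u)
  exact ⟨2 * min N N', fun n hn => hN n (by omega), fun n hn => hN' n (by omega)⟩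

theorem eq_zero_of_forall_mem_weightSubgroup {u : SuperLaurent σ}
    (hu : ∀ w, u ∈ weightSubgroup σ w) : u = 0 := by
  ext n
  · exact (hu (2 * n + 1)).1 n (by omega)
  · exact (hu (2 * n + 2)).2 n (by omega)

theorem ringSubgroupsBasis_weightSubgroup (σ : S →+* S) :
    RingSubgroupsBasis (weightSubgroup σ) :=
  ringSubgroupsBasis_of_filtration weightSubgroup_antitone
    (fun _ _ _ hu _ hv => mul_mem_weightSubgroup hu hv) exists_mem_weightSubgroup

instance : TopologicalSpace (SuperLaurent σ) := (ringSubgroupsBasis_weightSubgroup σ).topology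

instance : NonarchimedeanRing (SuperLaurent σ) :=
  (ringSubgroupsBasis_weightSubgroup σ).nonarchimedean

theorem hasBasis_nhds_zero :
    (nhds (0 : SuperLaurent σ)).HasBasis (fun _ => True) fun w => (weightSubgroup σ w : Set _) :=
  (ringSubgroupsBasis_weightSubgroup σ).hasBasis_nhds_zero

instance : T2Space (SuperLaurent σ) := by
  refine IsTopologicalAddGroup.t2Space_of_zero_sep fun u hu => ?_
  by_contra! hnhds
  exact hu (eq_zero_of_forall_mem_weightSubgroup fun w =>
    hnhds _ (hasBasis_nhds_zero.mem_of_mem trivial))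

theorem isClosed_weightSubgroup (w : ℤ) : IsClosed (weightSubgroup σ w : Set (SuperLaurent σ)) :=
  AddSubgroup.isClosed_of_isOpen _
    ((ringSubgroupsBasis_weightSubgroup σ).openAddSubgroup w).isOpen

theorem continuous_of_map_weightSubgroup {E : SuperLaurent σ →+ SuperLaurent σ}
    (hE : ∀ w, ∀ u ∈ weightSubgroup σ w, E u ∈ weightSubgroup σ w) : Continuous E :=
  continuous_of_continuousAt_zero E <| by
    rw [ContinuousAt, map_zero]
    exact (hasBasis_nhds_zero.tendsto_iff hasBasis_nhds_zero).mpr fun w _ => ⟨w, trivial, hE w⟩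

/-- The additive map sending `a + φb` to the coefficient of `xⁿ` in `a`. -/
def evenCoeff (σ : S →+* S) (n : ℤ) : SuperLaurent σ →+ S :=
  (HahnSeries.coeff.addMonoidHom n).comp even

/-- The additive map sending `a + φb` to the coefficient of `xⁿ` in `b`. -/
def oddCoeff (σ : S →+* S) (n : ℤ) : SuperLaurent σ →+ S :=
  (HahnSeries.coeff.addMonoidHom n).comp odd

theorem eventually_evenCoeff_eq_zero (n : ℤ) : ∀ᶠ u in nhds 0, evenCoeff σ n u = 0 :=
  hasBasis_nhds_zero.eventually_iff.mpr ⟨2 * n + 1, trivial, fun _ hu => hu.1 n (by omega)⟩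

theorem eventually_oddCoeff_eq_zero (n : ℤ) : ∀ᶠ u in nhds 0, oddCoeff σ n u = 0 :=
  hasBasis_nhds_zero.eventually_iff.mpr ⟨2 * n + 2, trivial, fun _ hu => hu.2 n (by omega)⟩

theorem hasSum_of_coeff {ι : Type*} {f : ι → SuperLaurent σ} {e : SuperLaurent σ}
    (hfin : ∀ w, {i | f i ∉ weightSubgroup σ w}.Finite)
    (heven : ∀ n, evenCoeff σ n e = ∑ᶠ i, evenCoeff σ n (f i))
    (hodd : ∀ n, oddCoeff σ n e = ∑ᶠ i, oddCoeff σ n (f i)) : HasSum f e := by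
  refine (((ringSubgroupsBasis_weightSubgroup σ).hasBasis_nhds e).tendsto_right_iff).mpr
    fun w _ => Filter.eventually_atTop.mpr ⟨(hfin w).toFinset, fun s hs => ?_⟩
  have hmem (i) (hi : i ∉ s) : f i ∈ weightSubgroup σ w :=
    of_not_not fun h => hi (hs ((hfin w).mem_toFinset.mpr h))
  have hsum (c : SuperLaurent σ →+ S) (hc : ∀ u ∈ weightSubgroup σ w, c u = 0)
      (he : c e = ∑ᶠ i, c (f i)) : c (∑ i ∈ s, f i - e) = 0 := by
    rw [map_sub, he, map_sum, finsum_eq_sum_of_support_subset _ fun i hi =>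
      of_not_not fun his => hi (hc _ (hmem i his)), sub_self]
  exact ⟨fun n hn => hsum (evenCoeff σ n) (fun u hu => hu.1 n hn) (heven n),
    fun n hn => hsum (oddCoeff σ n) (fun u hu => hu.2 n hn) (hodd n)⟩

theorem summable_of_mem_weightSubgroup {f : ℕ → SuperLaurent σ} {w₀ : ℤ}
    (hf : ∀ k : ℕ, f k ∈ weightSubgroup σ (w₀ + k)) : Summable f := by
  have hf₀ (k : ℕ) : f k ∈ weightSubgroup σ w₀ := weightSubgroup_antitone (by simp) (hf k)
  let a : S⸨X⸩ := HahnSeries.ofSuppBddBelow (fun n => ∑ᶠ k, evenCoeff σ n (f k))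
    ⟨w₀ / 2, fun n hn => of_not_not fun h =>
      hn (finsum_eq_zero_of_forall_eq_zero fun k => (hf₀ k).1 n (by omega))⟩
  let b : S⸨X⸩ := HahnSeries.ofSuppBddBelow (fun n => ∑ᶠ k, oddCoeff σ n (f k))
    ⟨(w₀ - 1) / 2, fun n hn => of_not_not fun h =>
      hn (finsum_eq_zero_of_forall_eq_zero fun k => (hf₀ k).2 n (by omega))⟩
  refine (hasSum_of_coeff (e := mk a b) (fun w => ?_) (fun n => ?_) fun n => ?_).summable
  · refine (Set.finite_Iio (w - w₀).toNat).subset fun k hk => ?_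
    by_contra hlt
    exact hk (weightSubgroup_antitone (by rw [Set.mem_Iio] at hlt; omega) (hf k))
  · exact congrArg (HahnSeries.coeff · n) (even_mk (τ := mapCoeff σ) a b)
  · exact congrArg (HahnSeries.coeff · n) (odd_mk (τ := mapCoeff σ) a b)

theorem hasSum_coeHom_single (a : S⸨X⸩) :
    HasSum (fun n => (coeHom (HahnSeries.single n (a.coeff n)) : SuperLaurent σ)) (coeHom a) := by
  refine hasSum_of_coeff (fun w => ?_) (fun n => ?_) fun _ => ?_
  · obtain ⟨N, hN⟩ := exists_forall_lt_coeff_eq_zero a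
    refine (Set.finite_Icc N (w / 2)).subset fun n hn => ?_
    by_contra hout
    refine hn ⟨fun m hm => ?_, fun _ _ => rfl⟩
    rw [even_coeHom, HahnSeries.coeff_single]
    split_ifs with hmn
    · exact hN n (by rw [Set.mem_Icc] at hout; omega)
    · rfl
  · exact ((finsum_eq_single (fun m => evenCoeff σ n (coeHom (HahnSeries.single m (a.coeff m)))) n
      fun m hm => HahnSeries.coeff_single_of_ne hm.symm).trans
      (HahnSeries.coeff_single_same n _)).symm
  · exact (finsum_eq_zero_of_forall_eq_zero fun _ => rfl).symm

end Topology

section SuperExp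

variable {S : Type*} [Ring S] [Module ℚ S] {σ : S →+* S}

theorem rat_smul_mem_weightSubgroup (q : ℚ) {w : ℤ} {u : SuperLaurent σ}
    (hu : u ∈ weightSubgroup σ w) : q • u ∈ weightSubgroup σ w := by
  have hzero (c : SuperLaurent σ →+ S) (hc : c u = 0) : c (q • u) = 0 := by
    rw [map_rat_smul, hc, smul_zero]
  exact ⟨fun n hn => hzero (evenCoeff σ n) (hu.1 n hn),
    fun n hn => hzero (oddCoeff σ n) (hu.2 n hn)⟩

/-- The operator `T` of `slsT` as an additive endomorphism of `S((x))[φ]`; the summation indices are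
shifted as in `slsT`. -/
def superField (σ : S →+* S) (A M : ℕ → S) : SuperLaurent σ →+ SuperLaurent σ :=
  vectorField (laurentDeriv S) (seriesFrom 2 fun j => A (j + 1))
    (seriesFrom 1 fun j => (((j : ℚ) + 2) / 2) • A (j + 1)) (seriesFrom 1 fun j => M (j + 1))

variable {A M : ℕ → S}

theorem isDerivation_superField (hσ : IsSupercommutative σ) (hA : ∀ j, σ (A j) = A j)
    (hM : ∀ j, σ (M j) = -M j) : IsDerivation (superField σ A M) := by
  have hcentral (s : ℤ) {g : ℕ → S} (hg : ∀ j, σ (g j) = g j) (f : S⸨X⸩) :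
      f * seriesFrom s g = seriesFrom s g * f :=
    mul_seriesFrom (ψ := RingHom.id S) (fun r j => (hσ.mul_comm_of_even _ r (hg j)).symm) s f
  refine isDerivation_vectorField (fun f => ?_) isDerivation_laurentDeriv
    (fun f => (laurentDeriv_mapCoeff σ f).symm) (hcentral 2 fun j => hA (j + 1)) ?_
    (hcentral 1 fun j => by rw [map_rat_smul, hA])
    (mul_seriesFrom (fun r j => hσ.mul_eq_mul_map_of_odd (hM (j + 1)) r) 1) ?_
  · ext n
    exact hσ.involutive _
  · rw [mapCoeff_seriesFrom]
    exact congrArg _ (funext fun j => hA (j + 1))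
  · ext n
    by_cases hn : 1 ≤ n <;> simp [coeff_seriesFrom, hn, hM]

theorem superField_mem_weightSubgroup {w : ℤ} {u : SuperLaurent σ}
    (hu : u ∈ weightSubgroup σ w) : superField σ A M u ∈ weightSubgroup σ (w + 1) := by
  refine ⟨fun n hn => ?_, fun n hn => ?_⟩
  · simp only [superField, even_vectorField, HahnSeries.coeff_add]
    rw [coeff_seriesFrom_mul_eq_zero 2 _ fun i hi => by
        rw [coeff_laurentDeriv, hu.1 _ (by omega), smul_zero],
      coeff_seriesFrom_mul_eq_zero 1 _ fun i hi => hu.2 i (by omega), add_zero]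
  · simp only [superField, odd_vectorField, HahnSeries.coeff_add]
    rw [coeff_seriesFrom_mul_eq_zero 2 _ fun i hi => by
        rw [coeff_laurentDeriv, hu.2 _ (by omega), smul_zero],
      coeff_seriesFrom_mul_eq_zero 1 _ fun i hi => hu.2 i (by omega),
      coeff_seriesFrom_mul_eq_zero 1 _ fun i hi => by
        rw [coeff_laurentDeriv, hu.1 _ (by omega), smul_zero], add_zero, add_zero]

theorem expTerm_superField_mem_weightSubgroup {w : ℤ} {u : SuperLaurent σ}
    (hu : u ∈ weightSubgroup σ w) (k : ℕ) :
    expTerm (superField σ A M) k u ∈ weightSubgroup σ (w + k) := by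
  refine rat_smul_mem_weightSubgroup _ ?_
  induction k with
  | zero => simpa using hu
  | succ k ih =>
    rw [Function.iterate_succ_apply', Nat.cast_succ, ← add_assoc]
    exact superField_mem_weightSubgroup ih

theorem summable_expTerm_superField (u : SuperLaurent σ) :
    Summable fun k => expTerm (superField σ A M) k u := by
  obtain ⟨w, hw⟩ := exists_mem_weightSubgroup u
  exact summable_of_mem_weightSubgroup (expTerm_superField_mem_weightSubgroup hw)

/-- The ring endomorphism `exp (superField σ A M)` of `S((x))[φ]`. -/
def superExp (hD : IsDerivation (superField σ A M)) : SuperLaurent σ →+* SuperLaurent σ :=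
  hD.exp summable_expTerm_superField

theorem continuous_superExp (hD : IsDerivation (superField σ A M)) : Continuous (superExp hD) := by
  refine continuous_of_map_weightSubgroup (E := (superExp hD).toAddMonoidHom) fun w u hu => ?_
  refine tsum_mem (isClosed_weightSubgroup w) fun k => ?_
  exact weightSubgroup_antitone (by simp) (expTerm_superField_mem_weightSubgroup hu k)

theorem superExp_coeHom_single_zero (hD : IsDerivation (superField σ A M)) (r : S) :
    superExp hD (coeHom (HahnSeries.single 0 r)) = coeHom (HahnSeries.single 0 r) := by
  refine hD.exp_of_map_eq_zero _ ?_
  ext1 <;> simp [superField, laurentDeriv_single_zero]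

end SuperExp

section Comparison

variable {S : Type*} [Ring S] {σ : S →+* S}

/-- The pair of coefficient functions of an element of `S((x))[φ]`. -/
def toSLS (u : SuperLaurent σ) : SLS S := ((even u).coeff, (odd u).coeff)

theorem suppBddBelow_toSLS (u : SuperLaurent σ) :
    SuppBddBelow (toSLS u).1 ∧ SuppBddBelow (toSLS u).2 :=
  ⟨exists_forall_lt_coeff_eq_zero _, exists_forall_lt_coeff_eq_zero _⟩

theorem exists_toSLS_eq (σ : S →+* S) {p : SLS S} (h₁ : SuppBddBelow p.1)
    (h₂ : SuppBddBelow p.2) : ∃ a b, toSLS (mk a b : SuperLaurent σ) = p := by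
  have hbdd {c : ℤ → S} (hc : SuppBddBelow c) : BddBelow c.support :=
    hc.imp fun N hN n hn => not_lt.mp fun hlt => hn (hN n hlt)
  refine ⟨HahnSeries.ofSuppBddBelow p.1 (hbdd h₁), HahnSeries.ofSuppBddBelow p.2 (hbdd h₂), ?_⟩
  rw [toSLS, even_mk, odd_mk]
  rfl

theorem toSLS_add (u v : SuperLaurent σ) : toSLS (u + v) = toSLS u + toSLS v := rfl

theorem toSLS_one : toSLS (1 : SuperLaurent σ) = slsOne := by
  ext n <;> simp [toSLS, slsOne, HahnSeries.coeff_one]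

theorem toSLS_phi : toSLS (phi : SuperLaurent σ) = slsPhi := by
  ext n <;> simp [toSLS, phi, slsPhi, HahnSeries.coeff_one]

/-- The element `x` of `S((x))[φ]`, as a unit. -/
def unitX (σ : S →+* S) : (SuperLaurent σ)ˣ :=
  Units.map (coeHom (τ := mapCoeff σ)).toMonoidHom (laurentX S)

theorem toSLS_unitX : toSLS (unitX σ).val = slsX := by
  ext n <;> simp [toSLS, unitX, laurentX, slsX, HahnSeries.coeff_single]

theorem toSLS_mul (u v : SuperLaurent σ) : toSLS (u * v) = slsMul σ (toSLS u) (toSLS v) := by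
  refine Prod.ext (funext fun n => laurent_coeff_mul _ _ n) (funext fun n => ?_)
  exact congrArg₂ (· + ·) (laurent_coeff_mul (mapCoeff σ (even u)) (odd v) n)
    (laurent_coeff_mul (odd u) (even v) n)

theorem toSLS_coeHom_single_zero_mul (r : S) (u : SuperLaurent σ) :
    toSLS (coeHom (HahnSeries.single 0 r) * u) = slsSmulL σ r (toSLS u) := by
  ext n
  · simp [toSLS, slsSmulL]
  · simp [toSLS, slsSmulL, mapCoeff_single]

theorem toSLS_pow (u : SuperLaurent σ) (k : ℕ) : toSLS (u ^ k) = slsPow σ (toSLS u) k := by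
  induction k with
  | zero => rw [pow_zero, toSLS_one, slsPow]
  | succ k ih => rw [pow_succ', toSLS_mul, ih, slsPow]

theorem toSLS_zpow (U : (SuperLaurent σ)ˣ) (n : ℤ) :
    toSLS (U ^ n).val = slsZPow σ (toSLS U.val) (toSLS U⁻¹.val) n := by
  rw [slsZPow]
  split_ifs with hn
  · obtain ⟨k, rfl⟩ := Int.eq_ofNat_of_zero_le hn
    simp [toSLS_pow]
  · obtain ⟨k, hk⟩ := Int.eq_ofNat_of_zero_le (show 0 ≤ -n by omega)
    obtain rfl : n = -k := by omega
    simp [toSLS_pow, -inv_pow]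

theorem toSLS_of_hasSum {f : ℤ → SuperLaurent σ} {e : SuperLaurent σ} (hf : HasSum f e) :
    toSLS e = slsSumZ fun n => toSLS (f n) :=
  Prod.ext (funext fun n => map_eq_finsum_of_hasSum (eventually_evenCoeff_eq_zero n) hf)
    (funext fun n => map_eq_finsum_of_hasSum (eventually_oddCoeff_eq_zero n) hf)

end Comparison

section ExpComparison

variable {S : Type*} [Ring S] [Algebra ℚ S] {σ : S →+* S} {A M : ℕ → S}

theorem toSLS_superField (u : SuperLaurent σ) :
    toSLS (superField σ A M u) = slsT A M (toSLS u) := by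
  have hfin (f : S⸨X⸩) (g : ℕ → S) (n s : ℤ) :
      (Function.support fun j : ℕ => g j * f.coeff (n - (j + s))).Finite :=
    (finite_support_coeff_sub f n s).subset fun j => right_ne_zero_of_mul
  refine Prod.ext (funext fun n => ?_) (funext fun n => ?_)
  · change (even (superField σ A M u)).coeff n = _
    simp only [superField, even_vectorField, HahnSeries.coeff_add, coeff_seriesFrom_mul]
    rw [← finsum_add_distrib (hfin _ _ n 2) (hfin _ _ n 1)]
    refine finsum_congr fun j => ?_
    rw [coeff_laurentDeriv, show n - (j + 2) + 1 = n - ((j : ℤ) + 1) by ring]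
    rfl
  · change (odd (superField σ A M u)).coeff n = _
    simp only [superField, odd_vectorField, HahnSeries.coeff_add, coeff_seriesFrom_mul]
    rw [← finsum_add_distrib (hfin _ _ n 2) (hfin _ _ n 1), ← finsum_add_distrib
      (((hfin _ _ n 2).union (hfin _ _ n 1)).subset (Function.support_add _ _)) (hfin _ _ n 1)]
    refine finsum_congr fun j => ?_
    rw [coeff_laurentDeriv, coeff_laurentDeriv, show n - (j + 2) + 1 = n - ((j : ℤ) + 1) by ring,
      show n - (j + 1) + 1 = n - (j : ℤ) by ring, smul_mul_assoc, ← mul_smul_comm, ← mul_add]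
    rfl

theorem toSLS_superExp (hD : IsDerivation (superField σ A M)) (u : SuperLaurent σ) :
    toSLS (superExp hD u) = slsExp A M (toSLS u) := by
  have hiterate (k : ℕ) : (slsT A M)^[k] (toSLS u) = toSLS ((superField σ A M)^[k] u) :=
    (Function.Semiconj.iterate_right toSLS_superField k u).symm
  have hterm (c : SuperLaurent σ →+ S) (k : ℕ) : c (expTerm (superField σ A M) k u) =
      (k.factorial : ℚ)⁻¹ • c ((superField σ A M)^[k] u) := map_rat_smul c _ _
  have hsum := hD.hasSum_exp summable_expTerm_superField u
  simp only [slsExp, hiterate]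
  refine Prod.ext (funext fun n => ?_) (funext fun n => ?_)
  · exact (map_eq_finsum_of_hasSum (eventually_evenCoeff_eq_zero n) hsum).trans
      (finsum_congr (hterm (evenCoeff σ n)))
  · exact (map_eq_finsum_of_hasSum (eventually_oddCoeff_eq_zero n) hsum).trans
      (finsum_congr (hterm (oddCoeff σ n)))

/-- The element `x̃ = exp(T)(x)` of `S((x))[φ]`, as a unit. -/
def unitXTilde (hD : IsDerivation (superField σ A M)) : (SuperLaurent σ)ˣ :=
  Units.map (superExp hD).toMonoidHom (unitX σ)

theorem toSLS_unitXTilde (hD : IsDerivation (superField σ A M)) :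
    toSLS (unitXTilde hD).val = slsExp A M slsX := by
  rw [← toSLS_unitX (σ := σ), ← toSLS_superExp hD]
  rfl

theorem superExp_coeHom_single (hD : IsDerivation (superField σ A M)) (n : ℤ) (r : S) :
    superExp hD (coeHom (HahnSeries.single n r)) =
      coeHom (HahnSeries.single 0 r) * (unitXTilde hD ^ n).val := by
  have hsingle : HahnSeries.single n r = HahnSeries.single 0 r * (laurentX S ^ n).val := by
    rw [laurentX_zpow_val, HahnSeries.single_mul_single, zero_add, mul_one]
  rw [hsingle, map_mul, map_mul, superExp_coeHom_single_zero, unitXTilde, unitX, ← map_zpow,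
    ← map_zpow]
  rfl

theorem toSLS_superExp_coeHom (hD : IsDerivation (superField σ A M)) (a : S⸨X⸩) :
    toSLS (superExp hD (coeHom a)) = slsSumZ fun n => slsSmulL σ (a.coeff n)
      (slsZPow σ (slsExp A M slsX) (toSLS (unitXTilde hD)⁻¹.val) n) := by
  have hsum := (hasSum_coeHom_single a).map (superExp hD) (continuous_superExp hD)
  simp only [toSLS_of_hasSum hsum, Function.comp_apply, superExp_coeHom_single,
    toSLS_coeHom_single_zero_mul, toSLS_zpow, toSLS_unitXTilde]

theorem slsSubst_toSLS_mk (hD : IsDerivation (superField σ A M)) (a b : S⸨X⸩) :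
    slsSubst σ (toSLS (mk a b : SuperLaurent σ)) (slsExp A M slsX)
        (toSLS (unitXTilde hD)⁻¹.val) (slsExp A M slsPhi) =
      slsExp A M (toSLS (mk a b : SuperLaurent σ)) := by
  calc
    _ = toSLS (superExp hD (coeHom a)) +
        slsMul σ (slsExp A M slsPhi) (toSLS (superExp hD (coeHom b))) := by
      rw [toSLS_superExp_coeHom, toSLS_superExp_coeHom, slsSubst, toSLS, even_mk, odd_mk]
    _ = toSLS (superExp hD (mk a b)) := by
      rw [mk_eq_add, map_add, map_mul, toSLS_add, toSLS_mul, toSLS_superExp hD phi, toSLS_phi]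
    _ = slsExp A M (toSLS (mk a b)) := toSLS_superExp hD _

end ExpComparison

end SuperLaurent

/-- with `(x̃, φ̃) = (exp(T)(x), exp(T)(φ))`, the element `x̃` is invertible
in `R((x))[φ]` (with inverse `Y`), and for every `H̄ ∈ R((x))[φ]` the substitution
`H̄(x̃, φ̃)` is (coefficientwise well defined and) equal to `exp(T)(H̄)`. -/
theorem statement5
    (σ : R →+* R) (hσ : ∀ r : R, σ (σ r) = r)
    (hcomm : ∀ u v : R, σ u = u → u * v = v * u)
    (hanti : ∀ u v : R, σ u = -u → σ v = -v → u * v = -(v * u))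
    (A M : ℕ → R) (hA : ∀ j, σ (A j) = A j) (hM : ∀ j, σ (M j) = -(M j)) :
    ∃ Y : SLS R, SuppBddBelow Y.1 ∧ SuppBddBelow Y.2 ∧
      slsMul σ (slsExp A M slsX) Y = slsOne ∧
      slsMul σ Y (slsExp A M slsX) = slsOne ∧
      ∀ u : SLS R, SuppBddBelow u.1 → SuppBddBelow u.2 →
        slsSubst σ u (slsExp A M slsX) Y (slsExp A M slsPhi) = slsExp A M u := by
  have hD := SuperLaurent.isDerivation_superField ⟨hσ, hcomm, hanti⟩ hA hM
  let X := SuperLaurent.unitXTilde hD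
  let Y := SuperLaurent.toSLS X⁻¹.val
  have hX : SuperLaurent.toSLS X.val = slsExp A M slsX :=
    SuperLaurent.toSLS_unitXTilde hD
  obtain ⟨hY₁, hY₂⟩ := SuperLaurent.suppBddBelow_toSLS X⁻¹.val
  refine ⟨Y, hY₁, hY₂, ?_, ?_, fun u hu₁ hu₂ => ?_⟩
  · rw [← hX, ← SuperLaurent.toSLS_mul, X.mul_inv, SuperLaurent.toSLS_one]
  · rw [← hX, ← SuperLaurent.toSLS_mul, X.inv_mul, SuperLaurent.toSLS_one]
  · obtain ⟨a, b, rfl⟩ := SuperLaurent.exists_toSLS_eq σ hu₁ hu₂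
    exact SuperLaurent.slsSubst_toSLS_mk hD a b

end
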